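/- Suppose every vertex of G has degree at most 6. Then the second moment of the number of collisions of two independent simple random walks on G killed upon exiting B, both started at 0, satisfies E_{0,0}(Z_B²) ≤ 6 R_eff(0, V∖B) + 72 R_eff(0, V∖B) · max_{x∈B} R_eff(x, V∖B). -/

import Mathlib

open MeasureTheory ENNReal
open scoped Classical

noncomputable section

variable {V : Type*}

/-- The cemetery-extended state space `B ∪ {†}` carries the discrete σ-algebra. -/
instance : MeasurableSpace (Option V) := ⊤

/-- One-step transition probabilities of the simple random walk on `G` killed
upon exiting `B`; the cemetery state `†` is `none`. -/
def killedStep (G : SimpleGraph V) [G.LocallyFinite] (B : Set V) :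
    Option V → Option V → ℝ≥0∞
  | some x, some y =>
      if x ∈ B ∧ G.Adj x y ∧ y ∈ B then ((G.degree x : ℝ≥0∞))⁻¹ else 0
  | some x, none =>
      if x ∈ B then
        (((G.neighborFinset x).filter (fun y => y ∉ B)).card : ℝ≥0∞) / (G.degree x : ℝ≥0∞)
      else 1
  | none, some _ => 0
  | none, none => 1

/-- Probability that the killed walk started at `a` follows `w` for its first `n` steps. -/
def killedCylProb (G : SimpleGraph V) [G.LocallyFinite] (B : Set V) (a : V)
    {n : ℕ} (w : Fin (n + 1) → Option V) : ℝ≥0∞ :=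
  (if w 0 = some a then 1 else 0) *
    ∏ i : Fin n, killedStep G B (w i.castSucc) (w i.succ)

/-- `μ` is the law of the simple random walk on `G` killed upon exiting `B`, started at `a`:
it is a probability measure on trajectories with the correct finite-dimensional
distributions. -/
def IsKilledWalkLaw (G : SimpleGraph V) [G.LocallyFinite] (B : Set V)
    (a : V) (μ : Measure (ℕ → Option V)) : Prop :=
  IsProbabilityMeasure μ ∧
    ∀ (n : ℕ) (w : Fin (n + 1) → Option V),
      μ {ω | ∀ i : Fin (n + 1), ω i = w i} = killedCylProb G B a w

/-- `ν` is the joint law of two independent killed walks started at `a` and `b`. -/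
def IsKilledPairLaw (G : SimpleGraph V) [G.LocallyFinite] (B : Set V)
    (a b : V) (ν : Measure (ℕ → Option V × Option V)) : Prop :=
  IsProbabilityMeasure ν ∧
    ∀ (n : ℕ) (w : Fin (n + 1) → Option V × Option V),
      ν {ω | ∀ i : Fin (n + 1), ω i = w i} =
        killedCylProb G B a (fun i => (w i).1) * killedCylProb G B b (fun i => (w i).2)

/-- The number of collisions `Z_B = Σ_{n ≥ 0} 1(Xₙ = Yₙ ∈ B)` of the two coordinate
walks along a trajectory. -/
def collisions (B : Set V) (ω : ℕ → Option V × Option V) : ℝ≥0∞ :=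
  ∑' n : ℕ, if ∃ x ∈ B, (ω n).1 = some x ∧ (ω n).2 = some x then 1 else 0

/-- The Dirichlet energy `ℰ(f,f) = (1/2) Σ_{x∼y} (f x - f y)²` of `f : V → ℝ`. -/
def energy (G : SimpleGraph V) (f : V → ℝ) : ℝ≥0∞ :=
  (1 / 2) * ∑' p : V × V,
    if G.Adj p.1 p.2 then ENNReal.ofReal ((f p.1 - f p.2) ^ 2) else 0

/-- The effective resistance between `A₁` and `A₂` in `G`, every edge being a unit
resistor: its inverse is the infimum of the energies of finite-energy functions
that are `1` on `A₁` and `0` on `A₂`. -/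
def effRes (G : SimpleGraph V) (A₁ A₂ : Set V) : ℝ≥0∞ :=
  (⨅ f ∈ {f : V → ℝ | energy G f ≠ ⊤ ∧ (∀ x ∈ A₁, f x = 1) ∧ ∀ x ∈ A₂, f x = 0},
    energy G f)⁻¹

section Helpers

open scoped NNReal

/-- Transition matrix of the killed walk. -/
def kP (G : SimpleGraph V) [G.LocallyFinite] (B : Set V) [Fintype B] : Matrix B B ℝ≥0 :=
  fun x y => if G.Adj x y then (G.degree x : ℝ≥0)⁻¹ else 0

theorem kP_rev1 (G : SimpleGraph V) [G.LocallyFinite] (B : Set V) [Fintype B]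
    (hd : ∀ x, 0 < G.degree x) (x y : B) :
    (G.degree x : ℝ≥0) * kP G B x y = G.degree y * kP G B y x := by
  have h1 : (G.degree (x : V) : ℝ≥0) ≠ 0 := by exact_mod_cast (hd x).ne'
  have h2 : (G.degree (y : V) : ℝ≥0) ≠ 0 := by exact_mod_cast (hd y).ne'
  unfold kP
  by_cases h : G.Adj x y
  · rw [if_pos h, if_pos h.symm, mul_inv_cancel₀ h1, mul_inv_cancel₀ h2]
  · rw [if_neg h, if_neg (fun h' => h h'.symm)]; simp

theorem kP_rev (G : SimpleGraph V) [G.LocallyFinite] (B : Set V) [Fintype B]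
    (hd : ∀ x, 0 < G.degree x) (n : ℕ) : ∀ (x y : B),
    (G.degree x : ℝ≥0) * (kP G B ^ n) x y = G.degree y * (kP G B ^ n) y x := by
  induction n with
  | zero =>
    intro x y
    by_cases h : x = y
    · subst h; rfl
    · simp [Matrix.one_apply, h, Ne.symm h]
  | succ n ih =>
    intro x y
    rw [pow_succ, Matrix.mul_apply, Finset.mul_sum]
    rw [← pow_succ, pow_succ', Matrix.mul_apply, Finset.mul_sum]
    refine Finset.sum_congr rfl fun z _ => ?_
    rw [← mul_assoc, ih x z, ← mul_assoc, kP_rev1 G B hd y z, mul_right_comm,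
      kP_rev1 G B hd z y, mul_right_comm]

theorem energy_eq (G : SimpleGraph V) [G.LocallyFinite] (B : Set V) [Fintype B]
    (hd : ∀ x, 0 < G.degree x) (f : V → ℝ) (hf : ∀ x ∉ B, f x = 0) :
    energy G f = ENNReal.ofReal
      (∑ x : B, (G.degree x : ℝ) * f x * (f x - ∑ y : B, (kP G B x y : ℝ) * f y)) := by
  set T : Finset V := B.toFinset ∪ B.toFinset.biUnion (fun x => G.neighborFinset x) with hT
  have hBT : B.toFinset ⊆ T := Finset.subset_union_left
  have hNT : ∀ x ∈ B, G.neighborFinset x ⊆ T := fun x hx y hy =>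
    Finset.mem_union_right _ (Finset.mem_biUnion.2 ⟨x, by simpa using hx, hy⟩)
  have h1 : (∑' p : V × V,
      if G.Adj p.1 p.2 then ENNReal.ofReal ((f p.1 - f p.2) ^ 2) else 0) =
      ∑ p ∈ T ×ˢ T, if G.Adj p.1 p.2 then ENNReal.ofReal ((f p.1 - f p.2) ^ 2) else 0 := by
    refine tsum_eq_sum fun p hp => ?_
    split_ifs with ha
    · by_cases hx : p.1 ∈ B
      · exact absurd (Finset.mem_product.2 ⟨hBT (by simpa using hx),
          hNT _ hx (by simpa using ha)⟩) hp
      · by_cases hy : p.2 ∈ B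
        · exact absurd (Finset.mem_product.2 ⟨hNT _ hy (by simpa using ha.symm),
            hBT (by simpa using hy)⟩) hp
        · simp [hf _ hx, hf _ hy]
    · rfl
  have h2 : (∑ p ∈ T ×ˢ T, if G.Adj p.1 p.2 then ENNReal.ofReal ((f p.1 - f p.2) ^ 2) else 0) =
      ENNReal.ofReal (∑ x ∈ T, ∑ y ∈ T, if G.Adj x y then (f x - f y) ^ 2 else 0) := by
    rw [← Finset.sum_product', ENNReal.ofReal_sum_of_nonneg]
    · refine Finset.sum_congr rfl fun p _ => ?_
      split_ifs <;> simp
    · intro p _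
      split_ifs <;> positivity
  have h3 : (∑ x ∈ T, ∑ y ∈ T, if G.Adj x y then (f x - f y) ^ 2 else 0) =
      2 * ∑ x ∈ T, ∑ y ∈ T, if G.Adj x y then f x * (f x - f y) else 0 := by
    have hc : (∑ x ∈ T, ∑ y ∈ T, if G.Adj x y then f x * (f x - f y) else 0) =
      ∑ x ∈ T, ∑ y ∈ T, if G.Adj x y then f y * (f y - f x) else 0 := by
      rw [Finset.sum_comm]
      refine Finset.sum_congr rfl fun x _ => Finset.sum_congr rfl fun y _ => ?_
      rw [G.adj_comm]
    rw [two_mul]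
    nth_rewrite 2 [hc]
    rw [← Finset.sum_add_distrib]
    refine Finset.sum_congr rfl fun x _ => ?_
    rw [← Finset.sum_add_distrib]
    refine Finset.sum_congr rfl fun y _ => ?_
    split_ifs <;> ring
  have h4 : (∑ x ∈ T, ∑ y ∈ T, if G.Adj x y then f x * (f x - f y) else 0) =
      ∑ x : B, (G.degree x : ℝ) * f x * (f x - ∑ y : B, (kP G B x y : ℝ) * f y) := by
    have hsub : ∀ F : V → ℝ, ∑ x : B, F x = ∑ x ∈ B.toFinset, F x := fun F =>
      Finset.sum_set_coe B
    have hBz : ∀ F : V → ℝ, (∀ x ∉ B, F x = 0) → ∑ x ∈ T, F x = ∑ x : B, F x := fun F hF => by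
      rw [hsub]
      exact (Finset.sum_subset hBT fun x _ hx => hF x (by simpa using hx)).symm
    rw [hBz _ (fun x hx => by simp [hf x hx])]
    refine Finset.sum_congr rfl fun x _ => ?_
    have hdx : (G.degree (x : V) : ℝ) ≠ 0 := by exact_mod_cast (hd x).ne'
    have e1 : (∑ y ∈ T, if G.Adj x y then f x * f x else 0) = G.degree x * (f x * f x) := by
      rw [← Finset.sum_filter, Finset.sum_const, nsmul_eq_mul]
      congr 2
      rw [← SimpleGraph.card_neighborFinset_eq_degree]
      congr 1
      ext y
      simp only [Finset.mem_filter, SimpleGraph.mem_neighborFinset, and_iff_right_iff_imp]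
      intro h
      exact hNT x x.2 (by simpa using h)
    have e2 : (∑ y ∈ T, if G.Adj x y then f x * f y else 0) =
        ∑ y : B, G.degree x * f x * (kP G B x y * f y) := by
      rw [hBz _ (fun y hy => by simp [hf y hy])]
      refine Finset.sum_congr rfl fun y _ => ?_
      unfold kP
      split_ifs
      · push_cast; field_simp
      · simp
    rw [mul_sub, Finset.mul_sum, ← e2, mul_assoc, ← e1, ← Finset.sum_sub_distrib]
    refine Finset.sum_congr rfl fun y _ => ?_
    split_ifs <;> ring
  unfold energy
  rw [h1, h2, h3, h4, ENNReal.ofReal_mul (by norm_num), ← mul_assoc]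
  simp [ENNReal.inv_mul_cancel]

theorem green_le (G : SimpleGraph V) [G.LocallyFinite] (B : Set V) [Fintype B]
    (hd : ∀ x, 0 < G.degree x) (x : B) :
    (∑' n, ((kP G B ^ n) x x : ℝ≥0∞)) / (G.degree x : ℝ≥0∞) ≤ effRes G {(x : V)} Bᶜ := by
  have key : ∀ N : ℕ, (∑ n ∈ Finset.range (N + 1), ((kP G B ^ n) x x : ℝ≥0∞)) /
      (G.degree x : ℝ≥0∞) ≤ effRes G {(x : V)} Bᶜ := by
    intro N
    set g : B → ℝ := fun y => ∑ n ∈ Finset.range (N + 1), ((kP G B ^ n) y x : ℝ) with hg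
    have hg0 : ∀ y, 0 ≤ g y := fun y => Finset.sum_nonneg fun n _ => NNReal.coe_nonneg _
    have hgx : 0 < g x := by
      rw [hg]; simp only
      rw [Finset.sum_range_succ']
      refine add_pos_of_nonneg_of_pos (Finset.sum_nonneg fun n _ => NNReal.coe_nonneg _) ?_
      simp
    have hPg : ∀ y, g y - ∑ z : B, (kP G B y z : ℝ) * g z =
        (if y = x then 1 else 0) - ((kP G B ^ (N+1)) y x : ℝ) := by
      intro y
      have : ∑ z : B, (kP G B y z : ℝ) * g z =
          ∑ n ∈ Finset.range (N + 1), ((kP G B ^ (n+1)) y x : ℝ) := by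
        simp only [hg, Finset.mul_sum]
        rw [Finset.sum_comm]
        refine Finset.sum_congr rfl fun n _ => ?_
        rw [pow_succ', Matrix.mul_apply]
        push_cast
        rfl
      rw [this]
      simp only [hg]
      rw [← Finset.sum_sub_distrib]
      have := Finset.sum_range_sub' (fun n => ((kP G B ^ n) y x : ℝ)) (N+1)
      rw [this]
      simp only [pow_zero, Matrix.one_apply]
      split_ifs <;> simp
    set f : V → ℝ := fun y => if h : y ∈ B then g ⟨y, h⟩ / g x else 0 with hfdef
    have hfB : ∀ y : B, f y = g y / g x := fun y => by simp [hfdef]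
    have hf0 : ∀ y ∉ B, f y = 0 := fun y hy => by simp [hfdef, hy]
    have hE : energy G f ≤ ENNReal.ofReal (G.degree x / g x) := by
      rw [energy_eq G B hd f hf0]
      refine ENNReal.ofReal_le_ofReal ?_
      have : ∀ y : B, (G.degree y : ℝ) * f y * (f y - ∑ z : B, (kP G B y z : ℝ) * f z) ≤
          if y = x then (G.degree x : ℝ) / g x else 0 := by
        intro y
        have e : f y - ∑ z : B, (kP G B y z : ℝ) * f z =
            ((if y = x then 1 else 0) - ((kP G B ^ (N+1)) y x : ℝ)) / g x := by
          rw [← hPg]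
          simp only [hfB, ← mul_div_assoc]
          rw [← Finset.sum_div, sub_div]
        rw [e, hfB]
        have hp : (0:ℝ) ≤ ((kP G B ^ (N+1)) y x : ℝ) := NNReal.coe_nonneg _
        have hnn : 0 ≤ (G.degree y : ℝ) * (g y / g x) :=
          mul_nonneg (Nat.cast_nonneg _) (div_nonneg (hg0 y) hgx.le)
        refine (mul_le_mul_of_nonneg_left (div_le_div_of_nonneg_right
          (sub_le_self _ hp) hgx.le) hnn).trans ?_
        split_ifs with h
        · subst h
          rw [div_self hgx.ne']
          simp [div_eq_mul_inv]
        · simp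
      refine (Finset.sum_le_sum fun y _ => this y).trans ?_
      simp
    unfold effRes
    rw [ENNReal.le_inv_iff_le_inv]
    refine (iInf₂_le f ⟨ne_top_of_le_ne_top ENNReal.ofReal_ne_top hE, ?_, ?_⟩).trans ?_
    rotate_left
    · intro y hy
      rw [Set.mem_singleton_iff.1 hy, hfB, div_self hgx.ne']
    · exact fun y hy => hf0 y hy
    · refine hE.trans (le_of_eq ?_)
      rw [ENNReal.ofReal_div_of_pos hgx, ENNReal.inv_div (by simp)
        (Or.inl (by exact_mod_cast (hd x).ne'))]
      congr 1
      · simp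
      · simp only [hg]
        rw [ENNReal.ofReal_sum_of_nonneg fun n _ => NNReal.coe_nonneg _]
        simp
  rw [ENNReal.tsum_eq_iSup_nat, ENNReal.iSup_div]
  refine iSup_le fun N => le_trans ?_ (key N)
  gcongr
  simp

theorem sq_sum_le (G : SimpleGraph V) [G.LocallyFinite] (B : Set V) [Fintype B]
    (hd : ∀ x, 0 < G.degree x) (hdeg : ∀ x : V, G.degree x ≤ 6) (x : B) :
    ∑' k, ∑ y : B, ((kP G B ^ k) x y : ℝ≥0∞) ^ 2 ≤ 6 * effRes G {(x : V)} Bᶜ := by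
  have hdx : (G.degree (x : V) : ℝ≥0) ≠ 0 := by exact_mod_cast (hd x).ne'
  have h1 : ∀ k, ∑ y : B, ((kP G B ^ k) x y : ℝ≥0∞) ^ 2 ≤
      6 / (G.degree x : ℝ≥0∞) * ((kP G B ^ (2 * k)) x x : ℝ≥0∞) := by
    intro k
    have : ∑ y : B, ((kP G B ^ k) x y) ^ 2 ≤
        6 / (G.degree x : ℝ≥0) * ((kP G B ^ (2 * k)) x x) := by
      rw [two_mul, pow_add, Matrix.mul_apply, Finset.mul_sum]
      refine Finset.sum_le_sum fun y _ => ?_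
      have hr := kP_rev G B hd k x y
      have : (kP G B ^ k) x y = G.degree y * (kP G B ^ k) y x / G.degree x := by
        rw [← hr]; field_simp
      rw [sq]
      nth_rewrite 2 [this]
      have h6 : (G.degree (y : V) : ℝ≥0) ≤ 6 := by exact_mod_cast hdeg y
      calc _ = (G.degree (y : V) : ℝ≥0) / G.degree (x : V) *
            ((kP G B ^ k) x y * (kP G B ^ k) y x) := by ring
        _ ≤ _ := by gcongr
    have h := ENNReal.coe_le_coe.2 this
    push_cast [ENNReal.coe_div hdx] at h
    exact h
  calc _ ≤ ∑' k, 6 / (G.degree x : ℝ≥0∞) * ((kP G B ^ (2 * k)) x x : ℝ≥0∞) :=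
        ENNReal.tsum_le_tsum h1
    _ = 6 / (G.degree x : ℝ≥0∞) * ∑' k, ((kP G B ^ (2 * k)) x x : ℝ≥0∞) := ENNReal.tsum_mul_left
    _ ≤ 6 / (G.degree x : ℝ≥0∞) * ∑' k, ((kP G B ^ k) x x : ℝ≥0∞) := by
        refine mul_le_mul' le_rfl ?_
        exact ENNReal.tsum_comp_le_tsum_of_injective
          (f := fun k : ℕ => 2 * k) (fun a b h => by simpa using h)
          (fun k => ((kP G B ^ k) x x : ℝ≥0∞))
    _ = 6 * ((∑' k, ((kP G B ^ k) x x : ℝ≥0∞)) / (G.degree x : ℝ≥0∞)) := by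
        simp only [div_eq_mul_inv]; ring
    _ ≤ _ := by gcongr; exact green_le G B hd x

theorem countable_of_conn (G : SimpleGraph V) [G.LocallyFinite] (hconn : G.Connected) :
    Countable V := by
  obtain ⟨o⟩ := hconn.nonempty
  have hw : ∀ n : ℕ, {y : V | ∃ p : G.Walk y o, p.length = n}.Countable := by
    intro n
    induction n with
    | zero =>
      refine (Set.countable_singleton o).mono ?_
      rintro y ⟨p, hp⟩
      exact SimpleGraph.Walk.eq_of_length_eq_zero hp
    | succ n ih =>
      refine (ih.biUnion (t := fun z _ => (G.neighborFinset z : Set V))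
        (fun z _ => (Finset.countable_toSet _))).mono ?_
      rintro y ⟨p, hp⟩
      cases p with
      | nil => simp at hp
      | cons h q =>
        rw [SimpleGraph.Walk.length_cons] at hp
        refine Set.mem_iUnion₂.2 ⟨_, ⟨q, by omega⟩, ?_⟩
        simpa using h.symm
  rw [← Set.countable_univ_iff]
  refine (Set.countable_iUnion hw).mono fun y _ => ?_
  obtain ⟨p⟩ := hconn.preconnected y o
  exact Set.mem_iUnion.2 ⟨p.length, p, rfl⟩

/-- Pair transition probabilities. -/
def pairStep (G : SimpleGraph V) [G.LocallyFinite] (B : Set V)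
    (s t : Option V × Option V) : ℝ≥0∞ :=
  killedStep G B s.1 t.1 * killedStep G B s.2 t.2

/-- k-step pair transition probabilities. -/
def pairH (G : SimpleGraph V) [G.LocallyFinite] (B : Set V) (t : Option V × Option V) :
    ℕ → Option V × Option V → ℝ≥0∞
  | 0, s => if s = t then 1 else 0
  | k + 1, s => ∑' u, pairStep G B s u * pairH G B t k u

theorem cyl_snoc (G : SimpleGraph V) [G.LocallyFinite] (B : Set V) (o : V)
    (ν : Measure (ℕ → Option V × Option V)) (hν : IsKilledPairLaw G B o o ν)
    (n : ℕ) (w : Fin (n + 1) → Option V × Option V) (u : Option V × Option V) :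
    ν {ω | (∀ i : Fin (n + 1), ω i = w i) ∧ ω (n + 1) = u} =
      ν {ω | ∀ i : Fin (n + 1), ω i = w i} * pairStep G B (w (Fin.last n)) u := by
  have hset : {ω : ℕ → Option V × Option V | (∀ i : Fin (n + 1), ω i = w i) ∧ ω (n + 1) = u} =
      {ω | ∀ i : Fin (n + 1 + 1), ω i = (Fin.snoc w u : Fin (n + 1 + 1) → _) i} := by
    ext ω
    simp only [Set.mem_ofPred_eq]
    rw [Fin.forall_fin_succ' (n := n + 1)]
    simp
  rw [hset, hν.2, hν.2]
  have hcyl : ∀ (v : Fin (n + 1) → Option V) (a : Option V) (v' : Fin (n + 1 + 1) → Option V),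
      (∀ i : Fin (n + 1), v' i.castSucc = v i) → v' (Fin.last _) = a →
      killedCylProb G B o v' = killedCylProb G B o v * killedStep G B (v (Fin.last n)) a := by
    intro v a v' h1 h2
    unfold killedCylProb
    rw [Fin.prod_univ_castSucc, ← mul_assoc]
    have h0 : v' 0 = v 0 := h1 0
    rw [h0]
    congr 1
    · congr 1
      refine Finset.prod_congr rfl fun i _ => ?_
      rw [h1, ← h1 i.succ]
      rfl
    · rw [h1, ← h2]
      rfl
  rw [hcyl (fun i => (w i).1) u.1 _ (fun i => by simp) (by simp),
    hcyl (fun i => (w i).2) u.2 _ (fun i => by simp) (by simp)]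
  unfold pairStep
  ring

theorem meas_eq [Countable V] (n : ℕ) (s : Option V × Option V) :
    MeasurableSet {ω : ℕ → Option V × Option V | ω n = s} := by
  have : MeasurableSingletonClass (Option V) := ⟨fun _ => trivial⟩
  exact (measurable_pi_apply (X := fun _ : ℕ => Option V × Option V) n)
    (measurableSet_singleton s)

theorem meas_cyl [Countable V] (n : ℕ) (w : Fin (n + 1) → Option V × Option V) :
    MeasurableSet {ω : ℕ → Option V × Option V | ∀ i : Fin (n + 1), ω i = w i} := by
  rw [Set.ofPred_forall]
  exact MeasurableSet.iInter fun i => meas_eq _ _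

theorem cyl_future [Countable V] (G : SimpleGraph V) [G.LocallyFinite] (B : Set V) (o : V)
    (ν : Measure (ℕ → Option V × Option V)) (hν : IsKilledPairLaw G B o o ν)
    (t : Option V × Option V) (k : ℕ) :
    ∀ (n : ℕ) (w : Fin (n + 1) → Option V × Option V),
    ν ({ω | ∀ i : Fin (n + 1), ω i = w i} ∩ {ω | ω (n + k) = t}) =
      ν {ω | ∀ i : Fin (n + 1), ω i = w i} * pairH G B t k (w (Fin.last n)) := by
  induction k with
  | zero =>
    intro n w
    simp only [pairH, add_zero]
    split_ifs with h
    · rw [mul_one]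
      congr 1
      ext ω
      simp only [Set.mem_inter_iff, Set.mem_ofPred_eq, and_iff_left_iff_imp]
      intro h'
      rw [← h, ← h' (Fin.last n)]
      rfl
    · rw [mul_zero]
      convert measure_empty (μ := ν)
      ext ω
      simp only [Set.mem_inter_iff, Set.mem_ofPred_eq, Set.mem_empty_iff_false, iff_false]
      rintro ⟨h1, h2⟩
      exact h (by rw [← h2, ← h1 (Fin.last n)]; rfl)
  | succ k ih =>
    intro n w
    have hdec : ({ω : ℕ → Option V × Option V | ∀ i : Fin (n + 1), ω i = w i} ∩
        {ω | ω (n + (k + 1)) = t}) =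
        ⋃ u : Option V × Option V, ({ω | ∀ i : Fin (n + 1 + 1),
          ω i = (Fin.snoc w u : Fin (n + 1 + 1) → Option V × Option V) i} ∩
          {ω | ω (n + 1 + k) = t}) := by
      ext ω
      simp only [Set.mem_inter_iff, Set.mem_ofPred_eq, Set.mem_iUnion]
      simp only [Fin.forall_fin_succ' (n := n + 1)]
      simp [add_assoc, add_comm 1 k]
    have hs : ∀ u, ν {ω | ∀ i : Fin (n + 1 + 1),
          ω i = (Fin.snoc w u : Fin (n + 1 + 1) → Option V × Option V) i} =
          ν {ω | ∀ i : Fin (n + 1), ω i = w i} * pairStep G B (w (Fin.last n)) u := by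
      intro u
      rw [← cyl_snoc G B o ν hν]
      congr 1
      ext ω
      simp only [Set.mem_ofPred_eq]
      rw [Fin.forall_fin_succ' (n := n + 1)]
      simp
    rw [hdec, measure_iUnion]
    · simp only [ih, hs, Fin.snoc_last, pairH]
      rw [← ENNReal.tsum_mul_left]
      simp only [mul_assoc]
    · intro u u' huu
      refine Set.disjoint_left.2 ?_
      rintro ω ⟨h1, -⟩ ⟨h2, -⟩
      apply huu
      have a := h1 (Fin.last _)
      have b := h2 (Fin.last _)
      rw [a] at b
      simpa using b
    · exact fun u => (meas_cyl _ _).inter (meas_eq _ _)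

theorem one_time [Countable V] (G : SimpleGraph V) [G.LocallyFinite] (B : Set V) (o : V)
    (ν : Measure (ℕ → Option V × Option V)) (hν : IsKilledPairLaw G B o o ν)
    (t : Option V × Option V) (k : ℕ) :
    ν {ω | ω k = t} = pairH G B t k (some o, some o) := by
  haveI := hν.1
  have h1 : ν {ω | ∀ i : Fin (0 + 1), ω i = (some o, some o)} = 1 := by
    rw [hν.2 0 (fun _ => (some o, some o))]
    simp [killedCylProb]
  have h2 := cyl_future G B o ν hν t k 0 (fun _ => (some o, some o))
  rw [h1, one_mul, Nat.zero_add k] at h2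
  rw [← h2, Set.inter_comm, measure_inter_conull]
  rw [prob_compl_eq_zero_iff (meas_cyl 0 _)]
  exact h1

theorem two_time [Countable V] (G : SimpleGraph V) [G.LocallyFinite] (B : Set V) (o : V)
    (ν : Measure (ℕ → Option V × Option V)) (hν : IsKilledPairLaw G B o o ν)
    (s t : Option V × Option V) (n k : ℕ) :
    ν ({ω | ω n = s} ∩ {ω | ω (n + k) = t}) = ν {ω | ω n = s} * pairH G B t k s := by
  let W := {w : Fin (n + 1) → Option V × Option V // w (Fin.last n) = s}
  have hdec : {ω : ℕ → Option V × Option V | ω n = s} =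
      ⋃ w : W, {ω | ∀ i : Fin (n + 1), ω i = w.1 i} := by
    ext ω
    simp only [Set.mem_ofPred_eq, Set.mem_iUnion]
    constructor
    · intro h
      exact ⟨⟨fun i => ω i, by simpa using h⟩, fun i => rfl⟩
    · rintro ⟨w, hw⟩
      have := hw (Fin.last n)
      rw [w.2] at this
      simpa using this
  have hdis : ∀ w w' : W, w ≠ w' → Disjoint
      {ω : ℕ → Option V × Option V | ∀ i : Fin (n + 1), ω i = w.1 i}
      {ω | ∀ i : Fin (n + 1), ω i = w'.1 i} := by
    intro w w' h
    refine Set.disjoint_left.2 fun ω h1 h2 => h (Subtype.ext (funext fun i => ?_))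
    rw [← h1 i, ← h2 i]
  rw [hdec, Set.iUnion_inter, measure_iUnion, measure_iUnion, ← ENNReal.tsum_mul_right]
  · refine tsum_congr fun w => ?_
    rw [cyl_future G B o ν hν t k n w.1, w.2]
  · exact fun w w' h => hdis w w' h
  · exact fun w => meas_cyl _ _
  · exact fun w w' h => (hdis w w' h).mono Set.inter_subset_left Set.inter_subset_left
  · exact fun w => (meas_cyl _ _).inter (meas_eq _ _)

theorem pairH_none (G : SimpleGraph V) [G.LocallyFinite] (B : Set V) (y y' : V) (k : ℕ) :
    ∀ s : Option V × Option V, (s.1 = none ∨ s.2 = none) →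
      pairH G B (some y, some y') k s = 0 := by
  induction k with
  | zero =>
    intro s hs
    simp only [pairH]
    rw [if_neg]
    rintro rfl
    simp at hs
  | succ k ih =>
    intro s hs
    simp only [pairH, ENNReal.tsum_eq_zero]
    rintro ⟨u, v⟩
    rcases s with ⟨a, b⟩
    rcases u with _ | u
    · rw [ih _ (Or.inl rfl), mul_zero]
    rcases v with _ | v
    · rw [ih _ (Or.inr rfl), mul_zero]
    simp only at hs
    rcases hs with rfl | rfl <;> simp [pairStep, killedStep]

theorem step_some (G : SimpleGraph V) [G.LocallyFinite] (B : Set V) [Fintype B]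
    (hd : ∀ x, 0 < G.degree x) (x y : B) :
    killedStep G B (some (x : V)) (some (y : V)) = (kP G B x y : ℝ≥0∞) := by
  have hdx : (G.degree (x : V) : ℝ≥0) ≠ 0 := by exact_mod_cast (hd x).ne'
  simp only [killedStep, kP, x.2, y.2, true_and, and_true]
  split_ifs
  · rw [ENNReal.coe_inv hdx]; simp
  · simp

theorem pairH_eq (G : SimpleGraph V) [G.LocallyFinite] (B : Set V) [Fintype B]
    (hd : ∀ x, 0 < G.degree x) (y y' : B) (k : ℕ) : ∀ x x' : B,
      pairH G B (some (y : V), some (y' : V)) k (some (x : V), some (x' : V)) =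
        ((kP G B ^ k) x y : ℝ≥0∞) * ((kP G B ^ k) x' y' : ℝ≥0∞) := by
  induction k with
  | zero =>
    intro x x'
    simp only [pairH, pow_zero, Matrix.one_apply, Prod.mk.injEq, Option.some.injEq, Subtype.coe_inj]
    by_cases h : x = y <;> by_cases h' : x' = y' <;> simp [h, h']
  | succ k ih =>
    intro x x'
    simp only [pairH]
    have hinj : Function.Injective
        (fun z : B × B => ((some (z.1 : V), some (z.2 : V)) : Option V × Option V)) := by
      rintro ⟨a, b⟩ ⟨c, d⟩ h
      simp only [Prod.mk.injEq, Option.some.injEq, Subtype.coe_inj] at h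
      rw [h.1, h.2]
    rw [← hinj.tsum_eq, tsum_fintype, Fintype.sum_prod_type]
    · simp only [pairStep, ih, step_some G B hd]
      rw [pow_succ', Matrix.mul_apply, Matrix.mul_apply]
      push_cast
      rw [Finset.sum_mul_sum]
      refine Finset.sum_congr rfl fun z _ => Finset.sum_congr rfl fun z' _ => ?_
      ring
    · rintro ⟨u, v⟩ hu
      rw [Function.mem_support] at hu
      rcases u with _ | u
      · exact absurd (by rw [pairH_none _ _ _ _ _ _ (Or.inl rfl), mul_zero]) hu
      rcases v with _ | v
      · exact absurd (by rw [pairH_none _ _ _ _ _ _ (Or.inr rfl), mul_zero]) hu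
      by_cases hub : u ∈ B
      · by_cases hvb : v ∈ B
        · exact ⟨(⟨u, hub⟩, ⟨v, hvb⟩), rfl⟩
        · exact absurd (by simp [pairStep, killedStep, hvb]) hu
      · exact absurd (by simp [pairStep, killedStep, hub]) hu

theorem sq_tsum_le (a : ℕ → ℝ≥0∞) (ha : ∀ n, a n * a n ≤ a n) :
    (∑' n, a n) ^ 2 ≤ ∑' n, a n + 2 * ∑' n, ∑' k, a n * a (n + k) := by
  have h0 : (∑' n, a n) ^ 2 = ∑' n, ∑' m, a n * a m := by
    rw [sq, ← ENNReal.tsum_mul_right]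
    simp only [ENNReal.tsum_mul_left]
  have hT : ∀ n, (∑' m, if n ≤ m then a n * a m else 0) = ∑' k, a n * a (n + k) := by
    intro n
    have hinj : Function.Injective (fun k : ℕ => n + k) := fun a b h => by simpa using h
    rw [← hinj.tsum_eq]
    · simp
    · intro m hm
      rw [Function.mem_support] at hm
      by_cases h : n ≤ m
      · exact ⟨m - n, by simp only; omega⟩
      · simp [h] at hm
  have hle : ∀ n m, a n * a m ≤ (if m = n then a n else 0) +
      ((if n ≤ m then a n * a m else 0) + (if m ≤ n then a m * a n else 0)) := by
    intro n m
    rcases le_total n m with h | h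
    · rw [if_pos h, ← add_assoc, add_right_comm]
      exact le_add_self
    · rw [if_pos h, ← add_assoc, mul_comm (a m)]
      exact le_add_self
  rw [h0]
  refine (ENNReal.tsum_le_tsum fun n => ENNReal.tsum_le_tsum fun m => hle n m).trans ?_
  simp only [ENNReal.tsum_add]
  rw [ENNReal.tsum_comm (f := fun n m => if m ≤ n then a m * a n else 0)]
  simp only [hT, tsum_ite_eq]
  rw [two_mul]

theorem main_aux (G : SimpleGraph V) [G.LocallyFinite] [Countable V] (B : Set V) [Fintype B]
    (hd : ∀ x, 0 < G.degree x) (o : B)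
    (ν : Measure (ℕ → Option V × Option V)) (hν : IsKilledPairLaw G B o o ν) :
    ∫⁻ ω, (collisions B ω) ^ 2 ∂ν ≤
      ∑' n, ∑ x : B, ((kP G B ^ n) o x : ℝ≥0∞) ^ 2 +
      2 * ∑' n, ∑' k, ∑ x : B, ((kP G B ^ n) o x : ℝ≥0∞) ^ 2 *
        ∑ y : B, ((kP G B ^ k) x y : ℝ≥0∞) ^ 2 := by
  let e : ℕ → B → (ℕ → Option V × Option V) → ℝ≥0∞ := fun n x =>
    Set.indicator {ω | ω n = (some (x : V), some (x : V))} 1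
  have hem : ∀ n x, Measurable (e n x) := fun n x => measurable_one.indicator (meas_eq _ _)
  have he : ∀ n ω, (if ∃ x ∈ B, (ω n).1 = some x ∧ (ω n).2 = some x then (1 : ℝ≥0∞) else 0) =
      ∑ x : B, e n x ω := by
    intro n ω
    split_ifs with h
    · obtain ⟨x, hx, h1, h2⟩ := h
      have hω : ω n = (some x, some x) := Prod.ext h1 h2
      rw [Finset.sum_eq_single (⟨x, hx⟩ : B)]
      · simp [e, hω]
      · rintro ⟨y, hy⟩ - hne
        simp only [e, Set.indicator_apply_eq_zero, Set.mem_ofPred_eq, hω]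
        intro h
        simp only [Prod.mk.injEq, Option.some.injEq, and_self] at h
        exact absurd (Subtype.ext h.symm) hne
      · simp
    · symm
      refine Finset.sum_eq_zero fun x _ => ?_
      simp only [e, Set.indicator_apply_eq_zero, Set.mem_ofPred_eq]
      intro h'
      exact absurd ⟨x, x.2, by rw [h'], by rw [h']⟩ h
  have hpt : ∀ ω, (collisions B ω) ^ 2 ≤ ∑' n, ∑ x : B, e n x ω +
      2 * ∑' n, ∑' k, ∑ x : B, ∑ y : B, e n x ω * e (n + k) y ω := by
    intro ω
    unfold collisions
    refine (sq_tsum_le _ fun n => by split_ifs <;> simp).trans ?_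
    simp only [he, Finset.sum_mul_sum]
    exact le_rfl
  have i1 : ∀ n x, ∫⁻ ω, e n x ω ∂ν = ((kP G B ^ n) o x : ℝ≥0∞) ^ 2 := by
    intro n x
    rw [lintegral_indicator_one (meas_eq _ _), one_time G B o ν hν, pairH_eq G B hd, sq]
  have i2 : ∀ n k x y, ∫⁻ ω, e n x ω * e (n + k) y ω ∂ν =
      ((kP G B ^ n) o x : ℝ≥0∞) ^ 2 * ((kP G B ^ k) x y : ℝ≥0∞) ^ 2 := by
    intro n k x y
    have : ∀ ω, e n x ω * e (n + k) y ω =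
        Set.indicator ({ω | ω n = (some (x : V), some (x : V))} ∩
          {ω | ω (n + k) = (some (y : V), some (y : V))}) 1 ω := by
      intro ω
      simp only [e, Set.indicator_apply, Set.mem_inter_iff, Pi.one_apply]
      split_ifs <;> simp_all
    simp only [this]
    rw [lintegral_indicator_one ((meas_eq _ _).inter (meas_eq _ _)), two_time G B o ν hν,
      one_time G B o ν hν, pairH_eq G B hd, pairH_eq G B hd, sq, sq]
  refine (lintegral_mono hpt).trans (le_of_eq ?_)
  have m2 : ∀ n k x y, Measurable (fun ω => e n x ω * e (n + k) y ω) :=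
    fun n k x y => (hem n x).mul (hem _ y)
  have m3 : ∀ n k, Measurable (fun ω => ∑ x : B, ∑ y : B, e n x ω * e (n + k) y ω) :=
    fun n k => Finset.measurable_sum _ fun x _ => Finset.measurable_sum _ fun y _ => m2 n k x y
  have m1 : ∀ n, Measurable (fun ω => ∑ x : B, e n x ω) :=
    fun n => Finset.measurable_sum _ fun x _ => hem n x
  rw [lintegral_add_left (Measurable.ennreal_tsum m1),
    lintegral_const_mul _ (Measurable.ennreal_tsum fun n => Measurable.ennreal_tsum (m3 n)),
    lintegral_tsum fun n => (m1 n).aemeasurable,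
    lintegral_tsum fun n => (Measurable.ennreal_tsum (m3 n)).aemeasurable]
  congr 1
  · refine tsum_congr fun n => ?_
    rw [lintegral_finsetSum _ fun x _ => hem n x]
    simp only [i1]
  · congr 1
    refine tsum_congr fun n => ?_
    rw [lintegral_tsum fun k => (m3 n k).aemeasurable]
    refine tsum_congr fun k => ?_
    rw [lintegral_finsetSum _ fun x _ => Finset.measurable_sum _ fun y _ => m2 n k x y]
    refine Finset.sum_congr rfl fun x _ => ?_
    rw [lintegral_finsetSum _ fun y _ => m2 n k x y, Finset.mul_sum]
    simp only [i2]

end Helpers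

/-- If every vertex of `G` has degree at most `6`, then the
second moment of the number of collisions of two independent simple random walks
on `G` killed upon exiting `B`, both started at `0`, satisfies
`E₀₀(Z_B²) ≤ 6 R_eff(0,V∖B) + 72 R_eff(0,V∖B) · max_{x∈B} R_eff(x,V∖B)`. -/
theorem second_moment_resistance_bound
    (G : SimpleGraph V) [G.LocallyFinite] (hconn : G.Connected) (hnt : Nontrivial V)
    (hdeg : ∀ x : V, G.degree x ≤ 6)
    (o : V) (B : Set V) (hB : B.Finite) (hoB : o ∈ B) (hBV : B ≠ Set.univ)
    (ν : Measure (ℕ → Option V × Option V)) (hν : IsKilledPairLaw G B o o ν) :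
    ∫⁻ ω, (collisions B ω) ^ 2 ∂ν ≤
      6 * effRes G {o} Bᶜ +
        72 * effRes G {o} Bᶜ * ⨆ x ∈ B, effRes G {x} Bᶜ := by
  haveI : Countable V := countable_of_conn G hconn
  haveI : Fintype B := hB.fintype
  have hd : ∀ x, 0 < G.degree x := fun x => hconn.preconnected.degree_pos_of_nontrivial x
  refine (main_aux G B hd ⟨o, hoB⟩ ν hν).trans ?_
  have hS := sq_sum_le G B hd hdeg
  refine add_le_add (hS ⟨o, hoB⟩) ?_
  set M := ⨆ x ∈ B, effRes G {x} Bᶜ with hM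
  have hxM : ∀ x : B, ∑' k, ∑ y : B, ((kP G B ^ k) x y : ℝ≥0∞) ^ 2 ≤ 6 * M := fun x =>
    (hS x).trans (by gcongr; exact le_iSup₂ (f := fun x (_ : x ∈ B) => effRes G {x} Bᶜ) x.1 x.2)
  have h1 : ∀ n, ∑' k, ∑ x : B, ((kP G B ^ n) ⟨o, hoB⟩ x : ℝ≥0∞) ^ 2 *
        ∑ y : B, ((kP G B ^ k) x y : ℝ≥0∞) ^ 2 ≤
      (∑ x : B, ((kP G B ^ n) ⟨o, hoB⟩ x : ℝ≥0∞) ^ 2) * (6 * M) := by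
    intro n
    rw [Summable.tsum_finsetSum fun _ _ => ENNReal.summable, Finset.sum_mul]
    refine Finset.sum_le_sum fun x _ => ?_
    rw [ENNReal.tsum_mul_left]
    gcongr
    exact hxM x
  calc _ ≤ 2 * ∑' n, (∑ x : B, ((kP G B ^ n) ⟨o, hoB⟩ x : ℝ≥0∞) ^ 2) * (6 * M) := by
        gcongr with n; exact h1 n
    _ ≤ 2 * ((6 * effRes G {o} Bᶜ) * (6 * M)) := by
        rw [ENNReal.tsum_mul_right]
        gcongr
        exact hS ⟨o, hoB⟩
    _ = _ := by ring

end
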